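/- For every δ > 0 there exists a real 2×2 matrix X with X.trace = 0 and X.det = −δ whose orbit under conjugation by the modular group is dense in the one-sheeted hyperboloid: the closure of {γ_ℝ * X * γ_ℝ⁻¹ | γ ∈ SL(2,ℤ)} contains the whole set S_δ = {Y : Matrix (Fin 2) (Fin 2) ℝ | Y.trace = 0 ∧ Y.det = −δ}. -/

import Mathlib

/-- The real matrix obtained from an element of the modular group `SL(2,ℤ)`. -/
noncomputable def modularToReal (γ : Matrix.SpecialLinearGroup (Fin 2) ℤ) :
    Matrix (Fin 2) (Fin 2) ℝ :=
  (γ : Matrix (Fin 2) (Fin 2) ℤ).map ((↑) : ℤ → ℝ)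

/-!
A point of the hyperboloid is an ordered pair of distinct points of the projective line, namely its
two eigenlines; under Klein's correspondence these are the end points of an oriented geodesic.
By Baire's theorem it suffices to prove that the modular group acts topologically transitively.
Since rational lines are dense and are all equivalent to `∞` under the modular group, every open set
has a translate containing a pair `(∞, y)`, and, with the two eigenvalues exchanged, a translate
containing a pair `(x, ∞)`. For large `n` the pair `(x - n, y)` is close to `(∞, y)`, while the
translation by `n` carries it to `(x, y + n)`, which is close to `(x, ∞)`.
-/

open Filter Topology Matrix MatrixGroups Bornology

theorem exists_dense_orbit_of_isTopologicallyTransitive (M X : Type*) [Monoid M]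
    [TopologicalSpace X] [MulAction M X] [ContinuousConstSMul M X]
    [MulAction.IsTopologicallyTransitive M X] [BaireSpace X] [SecondCountableTopology X]
    [Nonempty X] : ∃ x : X, Dense (MulAction.orbit M x) := by
  let B := TopologicalSpace.countableBasis X
  have hB : TopologicalSpace.IsTopologicalBasis B := TopologicalSpace.isBasis_countableBasis X
  have hitting_dense : Dense (⋂ V ∈ B, ⋃ m : M, (m • · : X → X) ⁻¹' V) :=
    dense_biInter_of_isOpen
      (fun V hV => isOpen_iUnion fun m => (hB.isOpen hV).preimage (continuous_const_smul m))
      (TopologicalSpace.countable_countableBasis X)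
      (fun V hV => (hB.isOpen hV).dense_iUnion_preimage_smul M
        (TopologicalSpace.nonempty_of_mem_countableBasis hV))
  obtain ⟨x, hx⟩ := hitting_dense.nonempty
  refine ⟨x, hB.dense_iff.mpr fun V hV _ => ?_⟩
  obtain ⟨m, hm⟩ := Set.mem_iUnion.mp (Set.mem_iInter₂.mp hx V hV)
  exact ⟨m • x, hm, MulAction.mem_orbit x m⟩

section Eigenbasis

/-- The matrix with eigenvalues `d i` and the columns of `P` as eigenvectors. It has this meaning
only for invertible `P`; otherwise `P⁻¹ = 0`, and so is the value. -/
noncomputable def ofEigenbasis {n R : Type*} [Fintype n] [DecidableEq n] [CommRing R] (d : n → R)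
    (P : Matrix n n R) : Matrix n n R :=
  P * diagonal d * P⁻¹

section CommRing

variable {n R : Type*} [Fintype n] [DecidableEq n] [CommRing R] (d : n → R)

theorem ofEigenbasis_mul (A P : Matrix n n R) :
    ofEigenbasis d (A * P) = A * ofEigenbasis d P * A⁻¹ := by
  simp only [ofEigenbasis, Matrix.mul_inv_rev, Matrix.mul_assoc]

theorem ofEigenbasis_mul_diagonal (P : Matrix n n R) {c : n → R} (hc : ∀ i, IsUnit (c i)) :
    ofEigenbasis d (P * diagonal c) = ofEigenbasis d P := by
  have hdet : IsUnit (diagonal c).det := by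
    rw [det_diagonal]
    exact IsUnit.prod_univ_iff.mpr hc
  rw [ofEigenbasis_mul, ofEigenbasis, (commute_diagonal c d).eq,
    mul_nonsing_inv_cancel_right _ _ hdet, ofEigenbasis]

theorem ofEigenbasis_submatrix_id_perm (P : Matrix n n R) (σ : Equiv.Perm n) :
    ofEigenbasis (d ∘ σ) (P.submatrix id σ) = ofEigenbasis d P := by
  have hinv : (P.submatrix id σ)⁻¹ = P⁻¹.submatrix σ id :=
    inv_submatrix_equiv P (Equiv.refl n) σ
  rw [ofEigenbasis, hinv, ← submatrix_diagonal_equiv, submatrix_mul_equiv, submatrix_mul_equiv,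
    submatrix_id_id, ofEigenbasis]

theorem ofEigenbasis_eq_of_mul_eq {d : n → R} {P X : Matrix n n R} (hP : IsUnit P.det)
    (h : X * P = P * diagonal d) : ofEigenbasis d P = X := by
  rw [ofEigenbasis, ← h, mul_nonsing_inv_cancel_right _ _ hP]

theorem trace_ofEigenbasis {P : Matrix n n R} (hP : IsUnit P.det) :
    (ofEigenbasis d P).trace = ∑ i, d i := by
  rw [ofEigenbasis, trace_conj ((isUnit_iff_isUnit_det P).mpr hP), trace_diagonal]

theorem det_ofEigenbasis {P : Matrix n n R} (hP : IsUnit P.det) :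
    (ofEigenbasis d P).det = ∏ i, d i := by
  rw [ofEigenbasis, det_conj ((isUnit_iff_isUnit_det P).mpr hP), det_diagonal]

theorem ofEigenbasis_fin_two_swap (a b p q r s : R) :
    ofEigenbasis ![a, b] !![p, q; r, s] = ofEigenbasis ![b, a] !![q, p; s, r] := by
  rw [← ofEigenbasis_submatrix_id_perm _ _ (Equiv.swap 0 1)]
  congr 1
  · ext i; fin_cases i <;> rfl
  · ext i j; fin_cases i <;> fin_cases j <;> rfl

end CommRing

theorem continuousAt_ofEigenbasis {n K : Type*} [Fintype n] [DecidableEq n] [Field K]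
    [TopologicalSpace K] [IsTopologicalDivisionRing K] (d : n → K) {P : Matrix n n K}
    (hP : P.det ≠ 0) : ContinuousAt (ofEigenbasis d) P := by
  have hinv : ContinuousAt (Inv.inv : Matrix n n K → Matrix n n K) P := by
    refine continuousAt_matrix_inv P ?_
    rw [Ring.inverse_eq_inv']
    exact continuousAt_inv₀ hP
  exact (continuousAt_id.mul continuousAt_const).mul hinv

theorem exists_ofEigenbasis_unipotent {K : Type*} [Field K] (d : Fin 2 → K)
    {P : Matrix (Fin 2) (Fin 2) K} (hP : P.det ≠ 0) (h₁₀ : P 1 0 = 0) :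
    ∃ y : K, ofEigenbasis d P = ofEigenbasis d !![1, y; 0, 1] := by
  have hprod : P 0 0 * P 1 1 ≠ 0 := by simpa [det_fin_two, h₁₀] using hP
  obtain ⟨h₀₀, h₁₁⟩ := mul_ne_zero_iff.mp hprod
  have hfactor : P = !![1, P 0 1 / P 1 1; 0, 1] * diagonal ![P 0 0, P 1 1] := by
    ext i j
    fin_cases i <;> fin_cases j <;> simp [h₁₀, h₁₁]
  refine ⟨P 0 1 / P 1 1, ?_⟩
  conv_lhs => rw [hfactor]
  refine ofEigenbasis_mul_diagonal d _ fun i => ?_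
  fin_cases i
  exacts [h₀₀.isUnit, h₁₁.isUnit]

theorem tendsto_ofEigenbasis_mul_cobounded {K : Type*} [NormedField K] (d : Fin 2 → K)
    (A : Matrix (Fin 2) (Fin 2) K) (y : K) :
    Tendsto (fun u : K => ofEigenbasis d (A * !![u, y; 1, 1])) (cobounded K)
      (𝓝 (ofEigenbasis d (A * !![1, y; 0, 1]))) := by
  simp only [ofEigenbasis_mul]
  refine Tendsto.mul_const _ (Tendsto.const_mul _ ?_)
  have rescaled : Tendsto (fun u : K => ofEigenbasis d !![1, y; u⁻¹, 1]) (cobounded K)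
      (𝓝 (ofEigenbasis d !![1, y; 0, 1])) := by
    have hcont : Continuous fun ε : K => !![1, y; ε, 1] := by fun_prop
    exact (continuousAt_ofEigenbasis d (by simp)).tendsto.comp
      ((hcont.tendsto 0).comp tendsto_inv₀_cobounded)
  refine rescaled.congr' ?_
  filter_upwards [eventually_ne_cobounded (0 : K)] with u hu
  have hfactor : !![u, y; 1, 1] = !![1, y; u⁻¹, 1] * diagonal ![u, 1] := by
    ext i j
    fin_cases i <;> fin_cases j <;> simp [hu]
  rw [hfactor, ofEigenbasis_mul_diagonal]
  intro i
  fin_cases i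
  exacts [hu.isUnit, isUnit_one]

end Eigenbasis

section Hyperboloid

/-- The quadric of `2 × 2` matrices of trace `t` and determinant `d`. Over `ℝ` and for
`4 * d < t ^ 2` it is a one-sheeted hyperboloid; the paper's `S_δ` is `hyperboloid 0 (-δ)`. -/
def hyperboloid {R : Type*} [CommRing R] (t d : R) : Set (Matrix (Fin 2) (Fin 2) R) :=
  {X | X.trace = t ∧ X.det = d}

theorem isClosed_hyperboloid {R : Type*} [CommRing R] [TopologicalSpace R] [IsTopologicalRing R]
    [T1Space R] (t d : R) : IsClosed (hyperboloid t d) :=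
  (isClosed_singleton.preimage continuous_id.matrix_trace).inter
    (isClosed_singleton.preimage continuous_id.matrix_det)

theorem conj_mem_hyperboloid {R : Type*} [CommRing R] {t d : R} {A X : Matrix (Fin 2) (Fin 2) R}
    (hA : IsUnit A) (hX : X ∈ hyperboloid t d) : A * X * A⁻¹ ∈ hyperboloid t d :=
  ⟨(trace_conj hA X).trans hX.1, (det_conj hA X).trans hX.2⟩

theorem ofEigenbasis_mem_hyperboloid {R : Type*} [CommRing R] (a b : R)
    {P : Matrix (Fin 2) (Fin 2) R} (hP : IsUnit P.det) :
    ofEigenbasis ![a, b] P ∈ hyperboloid (a + b) (a * b) :=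
  ⟨by simp [trace_ofEigenbasis _ hP], by simp [det_ofEigenbasis _ hP]⟩

theorem exists_ofEigenbasis_eq_of_mem_hyperboloid {K : Type*} [Field K] {a b : K} (hab : a ≠ b)
    {X : Matrix (Fin 2) (Fin 2) K} (hX : X ∈ hyperboloid (a + b) (a * b)) :
    ∃ P : Matrix (Fin 2) (Fin 2) K, P.det ≠ 0 ∧ ofEigenbasis ![a, b] P = X := by
  have hsub : a - b ≠ 0 := sub_ne_zero.mpr hab
  obtain ⟨htrace, hdet⟩ := hX
  rw [trace_fin_two] at htrace
  rw [det_fin_two] at hdet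
  -- By Cayley-Hamilton the columns of `X - b` are eigenvectors for `a`, those of `X - a` for `b`.
  by_cases h : X 0 0 = b
  · have hP : !![X 0 1, X 0 0 - a; X 1 1 - b, X 1 0].det ≠ 0 := by
      have : !![X 0 1, X 0 0 - a; X 1 1 - b, X 1 0].det = (a - b) ^ 2 := by
        rw [det_fin_two_of]
        grind
      exact this ▸ pow_ne_zero 2 hsub
    refine ⟨_, hP, ofEigenbasis_eq_of_mul_eq hP.isUnit ?_⟩
    ext i j
    fin_cases i <;> fin_cases j <;> simp [mul_apply, Fin.sum_univ_two] <;> grind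
  · have hP : !![X 0 0 - b, X 0 1; X 1 0, X 1 1 - a].det ≠ 0 := by
      have : !![X 0 0 - b, X 0 1; X 1 0, X 1 1 - a].det = (b - X 0 0) * (a - b) := by
        rw [det_fin_two_of]
        grind
      exact this ▸ mul_ne_zero (sub_ne_zero.mpr (Ne.symm h)) hsub
    refine ⟨_, hP, ofEigenbasis_eq_of_mul_eq hP.isUnit ?_⟩
    ext i j
    fin_cases i <;> fin_cases j <;> simp [mul_apply, Fin.sum_univ_two] <;> grind

end Hyperboloid

section ModularGroup

theorem modularToReal_one : modularToReal 1 = 1 := by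
  simp [modularToReal]

theorem modularToReal_mul (γ η : SL(2, ℤ)) :
    modularToReal (γ * η) = modularToReal γ * modularToReal η :=
  Matrix.map_mul (L := γ.1) (M := η.1) (f := Int.castRingHom ℝ)

theorem det_modularToReal (γ : SL(2, ℤ)) : (modularToReal γ).det = 1 :=
  (Int.cast_det (γ : Matrix (Fin 2) (Fin 2) ℤ)).symm.trans (by simp)

theorem isUnit_modularToReal (γ : SL(2, ℤ)) : IsUnit (modularToReal γ) :=
  (isUnit_iff_isUnit_det _).mpr (det_modularToReal γ ▸ isUnit_one)

theorem modularToReal_T_zpow (n : ℤ) :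
    modularToReal (ModularGroup.T ^ n) = !![1, (n : ℝ); 0, 1] := by
  rw [modularToReal, ModularGroup.coe_T_zpow]
  ext i j
  fin_cases i <;> fin_cases j <;> simp

theorem exists_isCoprime_mul_add_mul_eq_zero (x y : ℚ) :
    ∃ m n : ℤ, IsCoprime m n ∧ m * x + n * y = 0 := by
  by_cases hy : y = 0
  · exact ⟨0, 1, isCoprime_zero_left.mpr isUnit_one, by simp [hy]⟩
  · refine ⟨(x / y).den, -(x / y).num, (Rat.isCoprime_num_den _).symm.neg_right, ?_⟩
    have hratio : x / y * (x / y).den = (x / y).num := Rat.mul_den_eq_num _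
    field_simp at hratio
    push_cast
    linear_combination hratio

theorem exists_modularToReal_mul_apply_one_zero_eq_zero (Q : Matrix (Fin 2) (Fin 2) ℚ) :
    ∃ γ : SL(2, ℤ), (modularToReal γ * Q.map ((↑) : ℚ → ℝ)) 1 0 = 0 := by
  obtain ⟨m, n, hmn, hzero⟩ := exists_isCoprime_mul_add_mul_eq_zero (Q 0 0) (Q 1 0)
  obtain ⟨γ, hm, hn⟩ := hmn.exists_SL2_row 1
  refine ⟨γ, ?_⟩
  simp only [mul_apply, Fin.sum_univ_two, modularToReal, map_apply, hm, hn]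
  exact_mod_cast hzero

theorem exists_ofEigenbasis_unipotent_mem {a b : ℝ} (hab : a ≠ b)
    {U : Set (Matrix (Fin 2) (Fin 2) ℝ)} (hU : IsOpen U)
    (hne : (hyperboloid (a + b) (a * b) ∩ U).Nonempty) :
    ∃ (γ : SL(2, ℤ)) (y : ℝ), ofEigenbasis ![a, b] (modularToReal γ * !![1, y; 0, 1]) ∈ U := by
  obtain ⟨X, hX, hXU⟩ := hne
  obtain ⟨P, hP, rfl⟩ := exists_ofEigenbasis_eq_of_mem_hyperboloid hab hX
  have near : ∀ᶠ Q in 𝓝 P, ofEigenbasis ![a, b] Q ∈ U ∧ Q.det ≠ 0 :=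
    ((continuousAt_ofEigenbasis _ hP).eventually (hU.mem_nhds hXU)).and
      (continuous_id.matrix_det.continuousAt.eventually_ne hP)
  have rat_dense : DenseRange fun Q : Matrix (Fin 2) (Fin 2) ℚ => Q.map ((↑) : ℚ → ℝ) :=
    DenseRange.piMap fun _ => DenseRange.piMap fun _ => Rat.denseRange_cast
  obtain ⟨_, ⟨hQU, hQ⟩, Q, rfl⟩ := mem_closure_iff_nhds.mp (rat_dense P) _ near
  obtain ⟨γ, hγ⟩ := exists_modularToReal_mul_apply_one_zero_eq_zero Q
  obtain ⟨y, hy⟩ := exists_ofEigenbasis_unipotent ![a, b]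
    (by rwa [det_mul, det_modularToReal, one_mul]) hγ
  refine ⟨γ⁻¹, y, ?_⟩
  rwa [ofEigenbasis_mul, ← hy, ← ofEigenbasis_mul, ← Matrix.mul_assoc, ← modularToReal_mul,
    inv_mul_cancel, modularToReal_one, Matrix.one_mul]

/-- The modular group acts on the hyperboloid by conjugation. -/
noncomputable instance (t d : ℝ) : MulAction SL(2, ℤ) (hyperboloid t d) where
  smul γ X := ⟨_, conj_mem_hyperboloid (isUnit_modularToReal γ) X.2⟩
  one_smul X := Subtype.ext (by
    change modularToReal 1 * X.1 * (modularToReal 1)⁻¹ = X.1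
    simp [modularToReal_one])
  mul_smul γ η X := Subtype.ext (by
    change modularToReal (γ * η) * X.1 * (modularToReal (γ * η))⁻¹ =
      modularToReal γ * (modularToReal η * X.1 * (modularToReal η)⁻¹) * (modularToReal γ)⁻¹
    simp only [modularToReal_mul, Matrix.mul_inv_rev, Matrix.mul_assoc])

theorem coe_smul_hyperboloid {t d : ℝ} (γ : SL(2, ℤ)) (X : hyperboloid t d) :
    ((γ • X : hyperboloid t d) : Matrix (Fin 2) (Fin 2) ℝ) =
      modularToReal γ * X * (modularToReal γ)⁻¹ :=
  rfl

instance (t d : ℝ) : ContinuousConstSMul SL(2, ℤ) (hyperboloid t d) where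
  continuous_const_smul γ := by
    refine Continuous.subtype_mk ?_ _
    fun_prop

theorem modularToReal_mul_zpow_T_mul_inv_mul (g h : SL(2, ℤ)) (n : ℤ) (u y : ℝ) :
    modularToReal (h * ModularGroup.T ^ n * g⁻¹) * (modularToReal g * !![u, y; 1, 1]) =
      modularToReal h * !![u + n, y + n; 1, 1] := by
  rw [← Matrix.mul_assoc, ← modularToReal_mul, inv_mul_cancel_right, modularToReal_mul,
    modularToReal_T_zpow, Matrix.mul_assoc]
  congr 1
  ext i j
  fin_cases i <;> fin_cases j <;> simp

theorem isTopologicallyTransitive_hyperboloid {a b : ℝ} (hab : a ≠ b) :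
    MulAction.IsTopologicallyTransitive SL(2, ℤ) (hyperboloid (a + b) (a * b)) where
  exists_smul_inter := by
    rintro _ _ ⟨U, hU, rfl⟩ ⟨X, hXU⟩ ⟨V, hV, rfl⟩ ⟨Y, hYV⟩
    obtain ⟨g, y, hy⟩ := exists_ofEigenbasis_unipotent_mem hab hU ⟨X, X.2, hXU⟩
    obtain ⟨h, x, hx⟩ := exists_ofEigenbasis_unipotent_mem hab.symm hV
      ⟨Y, by rw [add_comm, mul_comm]; exact Y.2, hYV⟩
    have near_U : ∀ᶠ u in cobounded ℝ,
        ofEigenbasis ![a, b] (modularToReal g * !![u, y; 1, 1]) ∈ U :=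
      (tendsto_ofEigenbasis_mul_cobounded _ _ y).eventually (hU.mem_nhds hy)
    have near_V : ∀ᶠ v in cobounded ℝ,
        ofEigenbasis ![b, a] (modularToReal h * !![v, x; 1, 1]) ∈ V :=
      (tendsto_ofEigenbasis_mul_cobounded _ _ x).eventually (hV.mem_nhds hx)
    have hcast : Tendsto (fun n : ℕ => (n : ℝ)) atTop (cobounded ℝ) :=
      tendsto_natCast_atTop_cobounded
    obtain ⟨n, ⟨hnU, hne⟩, hnV⟩ :=
      ((((tendsto_const_sub_cobounded x).comp hcast).eventually
        (near_U.and (eventually_ne_cobounded y))).and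
        (((tendsto_const_add_cobounded y).comp hcast).eventually near_V)).exists
    let Z : hyperboloid (a + b) (a * b) :=
      ⟨ofEigenbasis ![a, b] (modularToReal g * !![x - n, y; 1, 1]),
        ofEigenbasis_mem_hyperboloid a b
          (by simpa [det_modularToReal, sub_eq_zero] using hne)⟩
    have hZU : Z ∈ Subtype.val ⁻¹' U := hnU
    refine ⟨h * ModularGroup.T ^ (n : ℤ) * g⁻¹, _, Set.smul_mem_smul_set hZU, ?_⟩
    rw [Set.mem_preimage, coe_smul_hyperboloid, ← ofEigenbasis_mul,
      modularToReal_mul_zpow_T_mul_inv_mul, Int.cast_natCast, sub_add_cancel, ofEigenbasis_mul,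
      ofEigenbasis_fin_two_swap, ← ofEigenbasis_mul]
    exact hnV

end ModularGroup

theorem exists_ne_add_eq_mul_eq {t d : ℝ} (h : 4 * d < t ^ 2) :
    ∃ a b : ℝ, a ≠ b ∧ a + b = t ∧ a * b = d := by
  set r := √(t ^ 2 - 4 * d)
  have hr : 0 < r := Real.sqrt_pos.mpr (by linarith)
  have hsq : r ^ 2 = t ^ 2 - 4 * d := Real.sq_sqrt (by linarith)
  refine ⟨(t + r) / 2, (t - r) / 2, ?_, by ring, by linear_combination -hsq / 4⟩
  intro heq
  linarith

theorem exists_dense_modular_orbit_on_one_sheeted_hyperboloid_general {t d : ℝ}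
    (h : 4 * d < t ^ 2) :
    ∃ X : Matrix (Fin 2) (Fin 2) ℝ, X.trace = t ∧ X.det = d ∧
      {Y : Matrix (Fin 2) (Fin 2) ℝ | Y.trace = t ∧ Y.det = d} ⊆
        closure {Y : Matrix (Fin 2) (Fin 2) ℝ |
          ∃ γ : SL(2, ℤ), Y = modularToReal γ * X * (modularToReal γ)⁻¹} := by
  obtain ⟨a, b, hab, rfl, rfl⟩ := exists_ne_add_eq_mul_eq h
  have := isTopologicallyTransitive_hyperboloid hab
  have : LocallyCompactSpace (Matrix (Fin 2) (Fin 2) ℝ) :=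
    inferInstanceAs (LocallyCompactSpace (Fin 2 → Fin 2 → ℝ))
  have : LocallyCompactSpace (hyperboloid (a + b) (a * b)) :=
    (isClosed_hyperboloid _ _).locallyCompactSpace
  have : SecondCountableTopology (Matrix (Fin 2) (Fin 2) ℝ) :=
    inferInstanceAs (SecondCountableTopology (Fin 2 → Fin 2 → ℝ))
  have : Nonempty (hyperboloid (a + b) (a * b)) :=
    ⟨_, ofEigenbasis_mem_hyperboloid a b (P := 1) (by simp)⟩
  obtain ⟨X, hX⟩ :=
    exists_dense_orbit_of_isTopologicallyTransitive SL(2, ℤ) (hyperboloid (a + b) (a * b))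
  refine ⟨X, X.2.1, X.2.2, (Subtype.dense_iff.mp hX).trans (closure_mono ?_)⟩
  rintro _ ⟨_, ⟨γ, rfl⟩, rfl⟩
  exact ⟨γ, coe_smul_hyperboloid γ X⟩

/-- On every one-sheeted hyperboloid `S_δ = {trace = 0, det = −δ}` (`δ > 0`) there is a
point whose orbit under conjugation by the modular group is dense in `S_δ`. -/
theorem exists_dense_modular_orbit_on_one_sheeted_hyperboloid (δ : ℝ) (hδ : 0 < δ) :
    ∃ X : Matrix (Fin 2) (Fin 2) ℝ, X.trace = 0 ∧ X.det = -δ ∧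
      {Y : Matrix (Fin 2) (Fin 2) ℝ | Y.trace = 0 ∧ Y.det = -δ} ⊆
        closure {Y : Matrix (Fin 2) (Fin 2) ℝ |
          ∃ γ : Matrix.SpecialLinearGroup (Fin 2) ℤ,
            Y = modularToReal γ * X * (modularToReal γ)⁻¹} :=
  exists_dense_modular_orbit_on_one_sheeted_hyperboloid_general (by linarith)
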